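/- arXiv:1512.07602 — 2 statements merged into one kernel-verified Lean document; each statement's English description precedes it below -/
import Mathlib

section
/- Let V, V' be Banach spaces, A ∈ L(V,V') a nonzero operator, and v ∈ V a unit vector with v ∉ ker A. Then there exist closed subspaces G ⊆ V and G' ⊆ V' that are complements to the lines ⟨v⟩ and ⟨Av⟩ respectively, such that: (1) A G ⊆ G'; (2) ‖π_{⟨v⟩//G}‖ ≤ c_1(A)/|Av| and ‖π_{⟨Av⟩//G'}‖ = 1; and (3) for every integer l ≥ 1 there is a constant C depending only on l such that C^{-1} V_{l+1}(A)/c_1(A) ≤ V_l(A|_G) ≤ C V_{l+1}(A)/|Av|, where V_l(A|_G) := sup{det(A|E) : E ⊆ G an l-dimensional subspace}. -/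
/-!
By Hahn–Banach there is a functional `f` of norm one with `f (A v) = ‖A v‖`; the complements are
`G = ker (f ∘ A)` and `G' = ker f`, with projections `x ↦ f (A x) / ‖A v‖ • v` and
`w ↦ f w / ‖A v‖ • A v`.

For the volume estimates, `det(A|E)` is compared with the determinants `det (φ i (A (e j)))`, where
`e` runs over `k` vectors of the unit ball of `E` and `φ` over `k` functionals of norm at most one.
Up to the factor `k ^ k`, the supremum of `det(A|E)` over the `k`-dimensional `E ≤ G` equals the
supremum of these pairing determinants over vectors of `G` (`abs_det_le_volGrowthOn`,
`volGrowthOn_le`). Indeed, in the coordinates given by functionals of norm at most one the unit ball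
lies in the cube of radius `1`, and it contains all combinations of `k` unit vectors with
coefficients at most `1 / k`; both inclusions are tight up to constants
for a system with pairing determinant `1`, and such a system exists (`exists_unimodular_pairing`).

It remains to compare pairing determinants of sizes `l` and `l + 1`. Adjoining `v` and `f` to a
system over `G` gives a block triangular matrix, which multiplies the determinant by `‖A v‖`
(`det_mul_le_volGrowth`). Conversely, in a system of `l + 1` vectors, subtracting multiples of the
one where `|f ∘ A|` is largest moves the others into `G` at the cost of doubling their norm, and
expansion along the remaining column gives the factor `(l + 1) ‖A‖ 2 ^ l`
(`det_le_volGrowthOn_ker`).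
-/

open Metric Filter MeasureTheory Topology

noncomputable section

section Defs

variable {V W : Type*} [NormedAddCommGroup V] [NormedSpace ℝ V]
  [NormedAddCommGroup W] [NormedSpace ℝ W]

/-- The operator norm of the restriction of `A` to the subspace `E`, `‖A|_E‖`. -/
noncomputable def restrNorm (A : V →L[ℝ] W) (E : Submodule ℝ V) : ℝ :=
  ‖A.comp E.subtypeL‖

/-- The minimal norm `m(A|_E) = inf {‖A v‖ : v ∈ E, ‖v‖ = 1}`. -/
noncomputable def minNorm (A : V →L[ℝ] W) (E : Submodule ℝ V) : ℝ :=
  sInf {r : ℝ | ∃ v ∈ E, ‖v‖ = 1 ∧ r = ‖A v‖}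

/-- `F` is a closed subspace of codimension `n`. -/
def ClosedCodim (F : Submodule ℝ V) (n : ℕ) : Prop :=
  IsClosed (F : Set V) ∧ FiniteDimensional ℝ (V ⧸ F) ∧ Module.finrank ℝ (V ⧸ F) = n

/-- The `k`-th Gelfand number of `A` (meaningful for `k ≥ 1`):
`c_k(A) = inf {‖A|_F‖ : F a closed subspace of codimension k - 1}`. -/
noncomputable def gelfand (k : ℕ) (A : V →L[ℝ] W) : ℝ :=
  sInf {r : ℝ | ∃ F : Submodule ℝ V, ClosedCodim F (k - 1) ∧ r = restrNorm A F}

/-- The unit sphere of a subspace. -/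
def subSphere (E : Submodule ℝ V) : Set V := {v : V | v ∈ E ∧ ‖v‖ = 1}

/-- Hausdorff distance between the unit spheres of two subspaces. -/
noncomputable def dHaus (E F : Submodule ℝ V) : ℝ :=
  Metric.hausdorffDist (subSphere E) (subSphere F)

/-- `π` is the (bounded) projection onto `E` parallel to `F`. -/
def IsProjOn (π : V →L[ℝ] V) (E F : Submodule ℝ V) : Prop :=
  (∀ v ∈ E, π v = v) ∧ (∀ v ∈ F, π v = 0)

open scoped Classical in
/-- The (unsigned) determinant `det(A|E)` of `A` restricted to a finite-dimensional
subspace `E`, defined as the ratio of the induced (Haar) volume of the image `A B_E`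
of the unit ball of `E` to that of the unit ball of `A E`; it equals `0` when `A|_E`
is not injective.  (The value of the ratio does not depend on the choice of linear
equivalence with `ℝ^k`, since any two such differ by a linear automorphism, which
rescales both volumes by the same factor.) -/
noncomputable def detOn (A : V →L[ℝ] W) (E : Submodule ℝ V) : ℝ :=
  if h : Nonempty ((↥(E.map A.toLinearMap)) ≃ₗ[ℝ] (Fin (Module.finrank ℝ ↥E) → ℝ)) then
    (volume (⇑h.some '' {w : ↥(E.map A.toLinearMap) | ∃ v ∈ E, ‖v‖ ≤ 1 ∧ A v = (w : W)})).toReal /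
      (volume (⇑h.some '' {w : ↥(E.map A.toLinearMap) | ‖(w : W)‖ ≤ 1})).toReal
  else 0

/-- `V_k(A)`: the maximal `k`-dimensional volume growth of `A`,
`V_k(A) = sup {det(A|E) : E ⊆ V a k-dimensional subspace}`. -/
noncomputable def volGrowth (k : ℕ) (A : V →L[ℝ] W) : ℝ :=
  sSup {r : ℝ | ∃ E : Submodule ℝ V, FiniteDimensional ℝ ↥E ∧ Module.finrank ℝ ↥E = k ∧
    r = detOn A E}

/-- `V_k(A|_G)`: maximal volume growth among `k`-dimensional subspaces of `G`. -/
noncomputable def volGrowthOn (k : ℕ) (A : V →L[ℝ] W) (G : Submodule ℝ V) : ℝ :=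
  sSup {r : ℝ | ∃ E : Submodule ℝ V, E ≤ G ∧ FiniteDimensional ℝ ↥E ∧
    Module.finrank ℝ ↥E = k ∧ r = detOn A E}

/-- `A : X × ℕ → L(V)` is a linear cocycle over `T`. -/
def IsCocycle {X : Type*} (T : X → X) (A : X → ℕ → (V →L[ℝ] V)) : Prop :=
  (∀ x, A x 0 = 1) ∧ ∀ x n m, A x (n + m) = (A (T^[m] x) n).comp (A x m)

/-- Continuity of a subspace-valued map with respect to the Hausdorff distance
between unit spheres. -/
def SubContinuous {X : Type*} [TopologicalSpace X] (𝓔 : X → Submodule ℝ V) : Prop :=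
  ∀ x : X, ∀ ε > (0 : ℝ), ∀ᶠ y in nhds x, dHaus (𝓔 x) (𝓔 y) < ε

end Defs

end
universe u v

section PareOff

variable {V : Type u} {W : Type v} [NormedAddCommGroup V] [NormedSpace ℝ V]
  [NormedAddCommGroup W] [NormedSpace ℝ W]

/-! ### Pairing matrices and coordinates -/

/-- The matrix `(φ i (x j))` of pairings of `k` functionals with `k` vectors. -/
def pairing {k : ℕ} (φ : Fin k → W →L[ℝ] ℝ) (x : Fin k → W) : Matrix (Fin k) (Fin k) ℝ :=
  Matrix.of fun i j => φ i (x j)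

lemma pairing_mulVec {k : ℕ} (φ : Fin k → W →L[ℝ] ℝ) (x : Fin k → W) (c : Fin k → ℝ) (i : Fin k) :
    (pairing φ x).mulVec c i = φ i (∑ j, c j • x j) := by
  simp [pairing, Matrix.mulVec, dotProduct, mul_comm]

/-- Functionals whose pairing matrix with vectors of a subspace of dimension at most `k` is
nonsingular are linear coordinates on that subspace. -/
lemma exists_coords {k : ℕ} (U : Submodule ℝ W) [FiniteDimensional ℝ U]
    (hU : Module.finrank ℝ U ≤ k) (φ : Fin k → W →L[ℝ] ℝ) (x : Fin k → W) (hx : ∀ j, x j ∈ U)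
    (hdet : (pairing φ x).det ≠ 0) :
    ∃ Ψ : U ≃ₗ[ℝ] (Fin k → ℝ), ∀ w i, Ψ w i = φ i w := by
  let L : U →ₗ[ℝ] (Fin k → ℝ) := LinearMap.pi fun i => (φ i).toLinearMap ∘ₗ U.subtype
  have hs : Function.Surjective L := by
    intro y
    refine ⟨⟨∑ j, ((pairing φ x)⁻¹.mulVec y) j • x j,
      Submodule.sum_mem _ fun j _ => U.smul_mem _ (hx j)⟩, ?_⟩
    ext i
    change φ i (∑ j, ((pairing φ x)⁻¹.mulVec y) j • x j) = y i
    rw [← pairing_mulVec, Matrix.mulVec_mulVec,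
      Matrix.mul_nonsing_inv _ (isUnit_iff_ne_zero.mpr hdet), Matrix.one_mulVec]
  have h1 : Module.finrank ℝ (Fin k → ℝ) ≤ Module.finrank ℝ U :=
    L.finrank_le_finrank_of_surjective hs
  have h2 : Module.finrank ℝ U = Module.finrank ℝ (Fin k → ℝ) :=
    le_antisymm (by simpa using hU) h1
  exact ⟨LinearEquiv.ofBijective L
    ⟨(LinearMap.injective_iff_surjective_of_finrank_eq_finrank h2).mpr hs, hs⟩, fun w i => rfl⟩

lemma volume_mulVec_closedBall {k : ℕ} (M : Matrix (Fin k) (Fin k) ℝ) {r : ℝ} (hr : 0 ≤ r) :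
    volume (M.mulVec '' closedBall 0 r) = ENNReal.ofReal (|M.det| * (2 * r) ^ k) := by
  have h := Measure.addHaar_image_linearMap (volume : Measure (Fin k → ℝ))
    (Matrix.toLin' M) (closedBall 0 r)
  rw [LinearMap.det_toLin', Real.volume_pi_closedBall _ hr, Fintype.card_fin,
    ← ENNReal.ofReal_mul (abs_nonneg _)] at h
  exact h

lemma norm_sum_smul_le_one {k : ℕ} (x : Fin k → W) (hx : ∀ j, ‖x j‖ ≤ 1) (c : Fin k → ℝ)
    (hc : ‖c‖ ≤ (k : ℝ)⁻¹) : ‖∑ j, c j • x j‖ ≤ 1 := by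
  calc ‖∑ j, c j • x j‖ ≤ ∑ j : Fin k, (k : ℝ)⁻¹ := by
        refine norm_sum_le_of_le _ fun j _ => ?_
        rw [norm_smul]
        calc ‖c j‖ * ‖x j‖ ≤ ‖c j‖ * 1 := by gcongr; exact hx j
          _ ≤ _ := by rw [mul_one]; exact (norm_le_pi_norm c j).trans hc
    _ = k * (k : ℝ)⁻¹ := by simp
    _ ≤ 1 := mul_inv_le_one

/-! ### Comparison of `detOn` with pairing determinants -/

lemma detOn_nonneg (A : V →L[ℝ] W) (E : Submodule ℝ V) : 0 ≤ detOn A E := by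
  unfold detOn
  split_ifs <;> positivity

/-- The ratio defining `detOn` may be computed in any linear coordinates. -/
lemma detOn_eq {k : ℕ} (A : V →L[ℝ] W) (E : Submodule ℝ V) (hk : Module.finrank ℝ E = k)
    (Ψ : (E.map A.toLinearMap) ≃ₗ[ℝ] (Fin k → ℝ)) :
    detOn A E =
      (volume (Ψ '' {w | ∃ v ∈ E, ‖v‖ ≤ 1 ∧ A v = (w : W)})).toReal /
        (volume (Ψ '' {w | ‖(w : W)‖ ≤ 1})).toReal := by
  subst hk
  have h : Nonempty ((E.map A.toLinearMap) ≃ₗ[ℝ] (Fin (Module.finrank ℝ E) → ℝ)) := ⟨Ψ⟩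
  rw [detOn, dif_pos h]
  have key : ∀ s : Set (E.map A.toLinearMap), (volume (Ψ '' s)).toReal =
      |LinearMap.det (h.some.symm.trans Ψ).toLinearMap| * (volume (h.some '' s)).toReal := by
    intro s
    have h1 : Ψ '' s = (h.some.symm.trans Ψ).toLinearMap '' (h.some '' s) := by
      rw [Set.image_image]
      simp
    rw [h1, Measure.addHaar_image_linearMap, ENNReal.toReal_mul,
      ENNReal.toReal_ofReal (abs_nonneg _)]
  rw [key, key, mul_div_mul_left]
  exact abs_ne_zero.mpr (LinearEquiv.isUnit_det' _).ne_zero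

/-- A pairing determinant on vectors of the unit ball bounds the volume distortion of their span from
below. -/
lemma abs_det_le_detOn {k : ℕ} (A : V →L[ℝ] W) (e : Fin k → V) (he : ∀ j, ‖e j‖ ≤ 1)
    (φ : Fin k → W →L[ℝ] ℝ) (hφ : ∀ i, ‖φ i‖ ≤ 1) (hdet : (pairing φ (A ∘ e)).det ≠ 0) :
    Module.finrank ℝ (Submodule.span ℝ (Set.range e)) = k ∧
    |(pairing φ (A ∘ e)).det| ≤ (k : ℝ) ^ k * detOn A (Submodule.span ℝ (Set.range e)) := by
  set E := Submodule.span ℝ (Set.range e) with hE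
  have hmem : ∀ j, e j ∈ E := fun j => Submodule.subset_span ⟨j, rfl⟩
  have hfin : FiniteDimensional ℝ E := FiniteDimensional.span_of_finite ℝ (Set.finite_range e)
  have hEk : Module.finrank ℝ E ≤ k := by
    simpa [Set.finrank] using finrank_range_le_card (R := ℝ) e
  have hle : Module.finrank ℝ (E.map A.toLinearMap) ≤ Module.finrank ℝ E :=
    Submodule.finrank_map_le _ _
  obtain ⟨Ψ, hΨ⟩ := exists_coords (E.map A.toLinearMap) (hle.trans hEk) φ (A ∘ e)
    (fun j => ⟨e j, hmem j, rfl⟩) hdet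
  have hk : Module.finrank ℝ E = k := by
    refine le_antisymm hEk (le_trans (le_of_eq ?_) hle)
    simpa using Ψ.finrank_eq.symm
  refine ⟨hk, ?_⟩
  rw [detOn_eq A E hk Ψ]
  set S : Set (E.map A.toLinearMap) := {w | ∃ v ∈ E, ‖v‖ ≤ 1 ∧ A v = (w : W)} with hS
  set B : Set (E.map A.toLinearMap) := {w | ‖(w : W)‖ ≤ 1} with hB
  have hbd : ∀ (w : E.map A.toLinearMap) (r : ℝ), 0 ≤ r → ‖(w : W)‖ ≤ r → Ψ w ∈ closedBall 0 r := by
    intro w r hr hw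
    rw [mem_closedBall_zero_iff, pi_norm_le_iff_of_nonneg hr]
    intro i
    rw [hΨ]
    calc ‖φ i w‖ ≤ ‖φ i‖ * ‖(w : W)‖ := (φ i).le_opNorm _
      _ ≤ 1 * r := by gcongr; exact hφ i
      _ = r := one_mul r
  have hS_fin : volume (Ψ '' S) ≠ ⊤ := by
    refine measure_ne_top_of_subset (s := closedBall 0 ‖A‖) ?_ measure_closedBall_lt_top.ne
    rintro _ ⟨w, ⟨x, -, hx1, hxw⟩, rfl⟩
    refine hbd w _ (norm_nonneg _) ?_
    rw [← hxw]
    simpa using A.le_opNorm_of_le hx1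
  have hB_sub : Ψ '' B ⊆ closedBall 0 1 := by
    rintro _ ⟨w, hw, rfl⟩
    exact hbd w 1 zero_le_one hw
  have hB_le : (volume (Ψ '' B)).toReal ≤ 2 ^ k := by
    have := ENNReal.toReal_mono measure_closedBall_lt_top.ne
      (measure_mono (μ := (volume : Measure (Fin k → ℝ))) hB_sub)
    rwa [Real.volume_pi_closedBall _ zero_le_one, ENNReal.toReal_ofReal (by positivity), mul_one,
      Fintype.card_fin] at this
  have hB_pos : 0 < (volume (Ψ '' B)).toReal := by
    refine ENNReal.toReal_pos ?_ (measure_ne_top_of_subset hB_sub measure_closedBall_lt_top.ne)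
    have hopen : IsOpen (Ψ '' ball 0 1) :=
      Ψ.toContinuousLinearEquiv.toHomeomorph.isOpenMap _ isOpen_ball
    refine ((hopen.measure_pos volume ⟨_, 0, mem_ball_self one_pos, rfl⟩).trans_le
      (measure_mono (Set.image_mono ?_))).ne'
    intro w hw
    exact (mem_ball_zero_iff.mp hw).le
  have hS_ge : |(pairing φ (A ∘ e)).det| * (2 * (k : ℝ)⁻¹) ^ k ≤ (volume (Ψ '' S)).toReal := by
    have hsub : (pairing φ (A ∘ e)).mulVec '' closedBall 0 (k : ℝ)⁻¹ ⊆ Ψ '' S := by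
      rintro _ ⟨c, hc, rfl⟩
      have hxE : ∑ j, c j • e j ∈ E := Submodule.sum_mem _ fun j _ => E.smul_mem _ (hmem j)
      refine ⟨⟨A (∑ j, c j • e j), _, hxE, rfl⟩, ⟨_, hxE,
        norm_sum_smul_le_one e he c (mem_closedBall_zero_iff.mp hc), rfl⟩, ?_⟩
      ext i
      rw [hΨ, pairing_mulVec]
      simp
    have := ENNReal.toReal_mono hS_fin (measure_mono hsub)
    rwa [volume_mulVec_closedBall _ (by positivity), ENNReal.toReal_ofReal (by positivity)] at this
  have hkk : (k : ℝ) ^ k * (2 * (k : ℝ)⁻¹) ^ k = 2 ^ k := by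
    rcases Nat.eq_zero_or_pos k with h0 | h0
    · simp [h0]
    · have : (k : ℝ) ≠ 0 := by positivity
      rw [← mul_pow]
      congr 1
      field_simp
  rw [← mul_div_assoc, le_div_iff₀ hB_pos]
  calc |(pairing φ (A ∘ e)).det| * (volume (Ψ '' B)).toReal
      ≤ |(pairing φ (A ∘ e)).det| * 2 ^ k := by gcongr
    _ = (k : ℝ) ^ k * (|(pairing φ (A ∘ e)).det| * (2 * (k : ℝ)⁻¹) ^ k) := by
        rw [← hkk]; ring
    _ ≤ _ := by gcongr

/-- Substitute for an Auerbach basis: unit vectors of `U` and unit functionals with unitriangular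
pairing matrix, obtained by repeatedly norming a vector and passing to the kernel. -/
lemma exists_unimodular_pairing (k : ℕ) : ∀ (U : Submodule ℝ W), FiniteDimensional ℝ U →
    Module.finrank ℝ U = k → ∃ (e : Fin k → W) (φ : Fin k → W →L[ℝ] ℝ),
      (∀ j, e j ∈ U) ∧ (∀ j, ‖e j‖ ≤ 1) ∧ (∀ i, ‖φ i‖ ≤ 1) ∧ (pairing φ e).det = 1 := by
  induction k with
  | zero => exact fun U _ _ => ⟨Fin.elim0, Fin.elim0, by simp, by simp, by simp, by simp⟩
  | succ k ih =>
    intro U hfin hU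
    obtain ⟨⟨u, huU⟩, hu0⟩ :=
      (Module.finrank_pos_iff_exists_ne_zero (R := ℝ) (M := U)).mp (by omega)
    have hu : u ≠ 0 := fun h => hu0 (Subtype.ext h)
    have hnu : ‖u‖ ≠ 0 := norm_ne_zero_iff.mpr hu
    obtain ⟨f, hf1, hfu⟩ := exists_dual_vector ℝ u hnu
    let g : U →ₗ[ℝ] ℝ := f.toLinearMap ∘ₗ U.subtype
    have hg : g ≠ 0 := by
      intro h
      have h1 : g ⟨u, huU⟩ = 0 := by rw [h]; rfl
      have h2 : g ⟨u, huU⟩ = ‖u‖ := hfu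
      exact hnu (h2.symm.trans h1)
    have hker : Module.finrank ℝ ((LinearMap.ker g).map U.subtype) = k := by
      rw [Submodule.finrank_map_subtype_eq]
      have h1 := LinearMap.finrank_range_add_finrank_ker g
      have h2 : LinearMap.range g = ⊤ := LinearMap.range_eq_top.mpr (LinearMap.surjective hg)
      rw [h2, finrank_top, Module.finrank_self, hU] at h1
      omega
    obtain ⟨e, φ, heU, he, hφ, hdet⟩ := ih ((LinearMap.ker g).map U.subtype) inferInstance hker
    have hfe : ∀ j, f (e j) = 0 := by
      intro j
      obtain ⟨y, hy, hye⟩ := heU j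
      rw [← hye]
      exact hy
    refine ⟨Fin.cons (‖u‖⁻¹ • u) e, Fin.cons f φ, ?_, ?_, ?_, ?_⟩
    · refine Fin.cases (U.smul_mem _ huU) fun j => ?_
      obtain ⟨y, hy, hye⟩ := heU j
      rw [Fin.cons_succ, ← hye]
      exact y.2
    · refine Fin.cases ?_ he
      simp [norm_smul, hnu]
    · exact Fin.cases hf1.le hφ
    · rw [Matrix.det_succ_row_zero, Fin.sum_univ_succ]
      have hsub : (pairing (Fin.cons f φ : Fin (k + 1) → W →L[ℝ] ℝ)
          (Fin.cons (‖u‖⁻¹ • u) e : Fin (k + 1) → W)).submatrix Fin.succ Fin.succ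
            = pairing φ e := by
        ext i j
        simp [pairing]
      simp only [Fin.succAbove_zero, hsub, hdet]
      simp [pairing, hfe, hfu, hnu]

/-- The volume distortion on a subspace is bounded by a pairing determinant on vectors of
its unit ball. -/
lemma detOn_le_abs_det {k : ℕ} (A : V →L[ℝ] W) (E : Submodule ℝ V) (hfin : FiniteDimensional ℝ E)
    (hk : Module.finrank ℝ E = k) :
    ∃ (e : Fin k → V) (φ : Fin k → W →L[ℝ] ℝ), (∀ j, e j ∈ E) ∧ (∀ j, ‖e j‖ ≤ 1) ∧
      (∀ i, ‖φ i‖ ≤ 1) ∧ detOn A E ≤ (k : ℝ) ^ k * |(pairing φ (A ∘ e)).det| := by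
  obtain ⟨e, f, heE, he, hf, hef⟩ := exists_unimodular_pairing k E hfin hk
  by_cases h : Nonempty ((E.map A.toLinearMap) ≃ₗ[ℝ] (Fin (Module.finrank ℝ E) → ℝ))
  swap
  · refine ⟨e, 0, heE, he, by simp, ?_⟩
    rw [detOn, dif_neg h]
    positivity
  have hk' : Module.finrank ℝ (E.map A.toLinearMap) = k := by
    simpa [hk] using h.some.finrank_eq
  obtain ⟨e', f', he'E, he', hf', hef'⟩ :=
    exists_unimodular_pairing k (E.map A.toLinearMap) inferInstance hk'
  refine ⟨e, f', heE, he, hf', ?_⟩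
  obtain ⟨Φ, hΦ⟩ := exists_coords E hk.le f e heE (by rw [hef]; exact one_ne_zero)
  obtain ⟨Ψ, hΨ⟩ := exists_coords _ hk'.le f' e' he'E (by rw [hef']; exact one_ne_zero)
  rw [detOn_eq A E hk Ψ]
  set S : Set (E.map A.toLinearMap) := {w | ∃ v ∈ E, ‖v‖ ≤ 1 ∧ A v = (w : W)} with hS
  set B : Set (E.map A.toLinearMap) := {w | ‖(w : W)‖ ≤ 1} with hB
  set M := pairing f' (A ∘ e) with hM
  set P := pairing f e with hP
  have hPu : IsUnit P.det := by rw [hef]; exact isUnit_one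
  have hS_le : (volume (Ψ '' S)).toReal ≤ |M.det| * 2 ^ k := by
    have hsub : Ψ '' S ⊆ (M * P⁻¹).mulVec '' closedBall 0 1 := by
      rintro _ ⟨w, ⟨x, hxE, hx1, hxw⟩, rfl⟩
      refine ⟨Φ ⟨x, hxE⟩, ?_, ?_⟩
      · rw [mem_closedBall_zero_iff, pi_norm_le_iff_of_nonneg zero_le_one]
        intro i
        rw [hΦ]
        calc ‖f i x‖ ≤ ‖f i‖ * ‖x‖ := (f i).le_opNorm _
          _ ≤ 1 * 1 := by gcongr; exact hf i
          _ = 1 := one_mul 1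
      · -- The vector `P⁻¹ (Φ x)` holds the coefficients of `x` in the basis `e`.
        set c := P⁻¹.mulVec (Φ ⟨x, hxE⟩) with hc
        have hxc : x = ∑ j, c j • e j := by
          have hmem : ∑ j, c j • e j ∈ E := Submodule.sum_mem _ fun j _ => E.smul_mem _ (heE j)
          have : (⟨x, hxE⟩ : E) = ⟨_, hmem⟩ := by
            apply Φ.injective
            ext i
            rw [hΦ ⟨_, hmem⟩, ← pairing_mulVec, hc, Matrix.mulVec_mulVec,
              Matrix.mul_nonsing_inv _ hPu, Matrix.one_mulVec]
          exact congrArg Subtype.val this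
        ext i
        have hAx : A x = ∑ j, c j • (A ∘ e) j := by
          rw [hxc]
          simp
        rw [← Matrix.mulVec_mulVec, ← hc, pairing_mulVec, hΨ, ← hxw, hAx]
    have := ENNReal.toReal_mono (by rw [volume_mulVec_closedBall _ zero_le_one]; simp)
      (measure_mono (μ := (volume : Measure (Fin k → ℝ))) hsub)
    rw [volume_mulVec_closedBall _ zero_le_one, ENNReal.toReal_ofReal (by positivity), mul_one,
      Matrix.det_mul, Matrix.det_nonsing_inv, hef] at this
    simpa using this
  have hB_ge : (2 * (k : ℝ)⁻¹) ^ k ≤ (volume (Ψ '' B)).toReal := by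
    have hB_fin : volume (Ψ '' B) ≠ ⊤ := by
      refine measure_ne_top_of_subset (s := closedBall 0 1) ?_ measure_closedBall_lt_top.ne
      rintro _ ⟨w, hw, rfl⟩
      rw [mem_closedBall_zero_iff, pi_norm_le_iff_of_nonneg zero_le_one]
      intro i
      rw [hΨ]
      calc ‖f' i w‖ ≤ ‖f' i‖ * ‖(w : W)‖ := (f' i).le_opNorm _
        _ ≤ 1 * 1 := by gcongr; exacts [hf' i, hw]
        _ = 1 := one_mul 1
    have hsub : (pairing f' e').mulVec '' closedBall 0 (k : ℝ)⁻¹ ⊆ Ψ '' B := by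
      rintro _ ⟨c, hc, rfl⟩
      refine ⟨⟨∑ j, c j • e' j, Submodule.sum_mem _ fun j _ => Submodule.smul_mem _ _ (he'E j)⟩,
        norm_sum_smul_le_one e' he' c (mem_closedBall_zero_iff.mp hc), ?_⟩
      ext i
      rw [hΨ, pairing_mulVec]
    have := ENNReal.toReal_mono hB_fin (measure_mono hsub)
    rwa [volume_mulVec_closedBall _ (by positivity), ENNReal.toReal_ofReal (by positivity), hef',
      abs_one, one_mul] at this
  have hkk : (k : ℝ) ^ k * (2 * (k : ℝ)⁻¹) ^ k = 2 ^ k := by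
    rcases Nat.eq_zero_or_pos k with h0 | h0
    · simp [h0]
    · have : (k : ℝ) ≠ 0 := by positivity
      rw [← mul_pow]
      congr 1
      field_simp
  have hpos : 0 < (2 * (k : ℝ)⁻¹) ^ k := by
    by_contra hneg
    have h0 : (2 * (k : ℝ)⁻¹) ^ k = 0 := le_antisymm (not_lt.mp hneg) (by positivity)
    rw [h0, mul_zero] at hkk
    exact pow_ne_zero k two_ne_zero hkk.symm
  rw [div_le_iff₀ (hpos.trans_le hB_ge)]
  calc (volume (Ψ '' S)).toReal ≤ |M.det| * 2 ^ k := hS_le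
    _ = (k : ℝ) ^ k * |M.det| * (2 * (k : ℝ)⁻¹) ^ k := by rw [← hkk]; ring
    _ ≤ _ := by gcongr

/-! ### Volume growth and pairing determinants -/

lemma abs_det_pairing_le {k : ℕ} (A : V →L[ℝ] W) (e : Fin k → V) (he : ∀ j, ‖e j‖ ≤ 1)
    (φ : Fin k → W →L[ℝ] ℝ) (hφ : ∀ i, ‖φ i‖ ≤ 1) :
    |(pairing φ (A ∘ e)).det| ≤ k.factorial • ‖A‖ ^ k := by
  have := Matrix.det_le (A := pairing φ (A ∘ e)) (abv := AbsoluteValue.abs) (x := ‖A‖) ?_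
  · simpa using this
  · intro i j
    change |φ i (A (e j))| ≤ ‖A‖
    calc |φ i (A (e j))| ≤ ‖φ i‖ * ‖A (e j)‖ := (φ i).le_opNorm _
      _ ≤ 1 * ‖A‖ := by
        gcongr
        · exact hφ i
        · simpa using A.le_opNorm_of_le (he j)
      _ = ‖A‖ := one_mul _

lemma bddAbove_volGrowthOn (k : ℕ) (A : V →L[ℝ] W) (G : Submodule ℝ V) :
    BddAbove {r : ℝ | ∃ E : Submodule ℝ V, E ≤ G ∧ FiniteDimensional ℝ ↥E ∧
      Module.finrank ℝ ↥E = k ∧ r = detOn A E} := by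
  refine ⟨(k : ℝ) ^ k * (k.factorial • ‖A‖ ^ k), ?_⟩
  rintro _ ⟨E, -, hfin, hk, rfl⟩
  obtain ⟨e, φ, -, he, hφ, h⟩ := detOn_le_abs_det A E hfin hk
  exact h.trans (by gcongr; exact abs_det_pairing_le A e he φ hφ)

lemma volGrowthOn_nonneg (k : ℕ) (A : V →L[ℝ] W) (G : Submodule ℝ V) :
    0 ≤ volGrowthOn k A G := by
  refine Real.sSup_nonneg ?_
  rintro _ ⟨E, -, -, -, rfl⟩
  exact detOn_nonneg A E

lemma volGrowth_eq_volGrowthOn_top (k : ℕ) (A : V →L[ℝ] W) :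
    volGrowth k A = volGrowthOn k A ⊤ := by
  simp [volGrowth, volGrowthOn]

lemma abs_det_le_volGrowthOn {k : ℕ} (A : V →L[ℝ] W) (G : Submodule ℝ V) (e : Fin k → V)
    (heG : ∀ j, e j ∈ G) (he : ∀ j, ‖e j‖ ≤ 1) (φ : Fin k → W →L[ℝ] ℝ) (hφ : ∀ i, ‖φ i‖ ≤ 1) :
    |(pairing φ (A ∘ e)).det| ≤ (k : ℝ) ^ k * volGrowthOn k A G := by
  by_cases hdet : (pairing φ (A ∘ e)).det = 0
  · rw [hdet, abs_zero]
    exact mul_nonneg (by positivity) (volGrowthOn_nonneg k A G)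
  · obtain ⟨hk, h⟩ := abs_det_le_detOn A e he φ hφ hdet
    refine h.trans ?_
    gcongr
    refine le_csSup (bddAbove_volGrowthOn k A G) ⟨_, ?_,
      FiniteDimensional.span_of_finite ℝ (Set.finite_range e), hk, rfl⟩
    exact Submodule.span_le.mpr (by rintro _ ⟨j, rfl⟩; exact heG j)

/-- To bound `volGrowthOn` from above it suffices to bound all pairing determinants. -/
lemma volGrowthOn_le {k : ℕ} (A : V →L[ℝ] W) (G : Submodule ℝ V) {b : ℝ}
    (hb : ∀ (e : Fin k → V) (φ : Fin k → W →L[ℝ] ℝ), (∀ j, e j ∈ G) → (∀ j, ‖e j‖ ≤ 1) →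
      (∀ i, ‖φ i‖ ≤ 1) → |(pairing φ (A ∘ e)).det| ≤ b) (hb0 : 0 ≤ b) :
    volGrowthOn k A G ≤ (k : ℝ) ^ k * b := by
  refine Real.sSup_le ?_ (by positivity)
  rintro _ ⟨E, hEG, hfin, hk, rfl⟩
  obtain ⟨e, φ, heE, he, hφ, h⟩ := detOn_le_abs_det A E hfin hk
  exact h.trans (by gcongr; exact hb e φ (fun j => hEG (heE j)) he hφ)

lemma gelfand_one (A : V →L[ℝ] W) : gelfand 1 A = ‖A‖ := by
  have hset : {r : ℝ | ∃ F : Submodule ℝ V, ClosedCodim F (1 - 1) ∧ r = restrNorm A F}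
      = {‖A‖} := by
    have htop : restrNorm A ⊤ = ‖A‖ := by
      rw [restrNorm]
      refine le_antisymm (ContinuousLinearMap.opNorm_le_bound _ (norm_nonneg _) fun x =>
        A.le_opNorm _) (A.opNorm_le_bound (ContinuousLinearMap.opNorm_nonneg _) fun x => ?_)
      exact (A.comp (⊤ : Submodule ℝ V).subtypeL).le_opNorm ⟨x, trivial⟩
    ext r
    constructor
    · rintro ⟨F, ⟨-, hfin, h0⟩, rfl⟩
      have hsub := Module.finrank_zero_iff.mp h0
      have : F = ⊤ := Submodule.Quotient.subsingleton_iff.mp hsub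
      rw [this, htop]
      rfl
    · rintro rfl
      refine ⟨⊤, ⟨isClosed_univ, inferInstance, ?_⟩, htop.symm⟩
      exact Module.finrank_zero_of_subsingleton
  rw [gelfand, hset, csInf_singleton]

/-! ### Passing between dimensions `l` and `l + 1` -/

/-- Adjoining the vector `v` and a functional `f` with `f ∘ A` vanishing on `G` multiplies
pairing determinants over `G` by `f (A v)`. -/
lemma det_mul_le_volGrowth {l : ℕ} (A : V →L[ℝ] W) (v : V) (hv : ‖v‖ = 1) (f : W →L[ℝ] ℝ)
    (hf : ‖f‖ = 1) (e : Fin l → V) (φ : Fin l → W →L[ℝ] ℝ) (heG : ∀ j, f (A (e j)) = 0)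
    (he : ∀ j, ‖e j‖ ≤ 1) (hφ : ∀ i, ‖φ i‖ ≤ 1) :
    |f (A v)| * |(pairing φ (A ∘ e)).det| ≤
      ((l + 1 : ℕ) : ℝ) ^ (l + 1) * volGrowth (l + 1) A := by
  rw [volGrowth_eq_volGrowthOn_top]
  refine le_trans (le_of_eq ?_) (abs_det_le_volGrowthOn A ⊤ (Fin.cons v e) (fun _ => trivial)
    (Fin.cases hv.le he) (Fin.cons f φ) (Fin.cases hf.le hφ))
  rw [Matrix.det_succ_row_zero, Fin.sum_univ_succ]
  have hsub : (pairing (Fin.cons f φ : Fin (l + 1) → W →L[ℝ] ℝ)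
      (A ∘ (Fin.cons v e : Fin (l + 1) → V))).submatrix Fin.succ Fin.succ
        = pairing φ (A ∘ e) := by
    ext i j
    simp [pairing]
  simp only [Fin.succAbove_zero, hsub]
  simp [pairing, heG, abs_mul]

/-- Clearing one column: after subtracting multiples of the vector on which `f ∘ A` is largest, the
other vectors lie in `ker (f ∘ A)` and have norm at most `2`; the determinant is then expanded along
the remaining column. -/
lemma det_le_volGrowthOn_ker {l : ℕ} (A : V →L[ℝ] W) (f : W →L[ℝ] ℝ)
    (e : Fin (l + 1) → V) (φ : Fin (l + 1) → W →L[ℝ] ℝ)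
    (he : ∀ j, ‖e j‖ ≤ 1) (hφ : ∀ i, ‖φ i‖ ≤ 1) :
    |(pairing φ (A ∘ e)).det| ≤ (l + 1) * (‖A‖ * (2 ^ l * ((l : ℝ) ^ l *
      volGrowthOn l A (LinearMap.ker (f.comp A).toLinearMap)))) := by
  set G := LinearMap.ker (f.comp A).toLinearMap with hG
  obtain ⟨p, hp⟩ := Finite.exists_max fun j => |f (A (e j))|
  -- If `f (A (e p)) = 0` then all numerators vanish as well, so division by zero does no harm.
  set t : Fin (l + 1) → ℝ := fun j => f (A (e j)) / f (A (e p)) with ht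
  have ht1 : ∀ j, |t j| ≤ 1 := by
    intro j
    rw [ht, abs_div]
    exact div_le_one_of_le₀ (hp j) (abs_nonneg _)
  have hft : ∀ j, f (A (e j)) = t j * f (A (e p)) := by
    intro j
    by_cases h0 : f (A (e p)) = 0
    · have := hp j
      simp only [h0, abs_zero, abs_nonpos_iff] at this
      rw [this, h0, mul_zero]
    · rw [ht]
      field_simp
  set e' : Fin (l + 1) → V := fun j => if j = p then e p else e j - t j • e p with he'
  have hdet : (pairing φ (A ∘ e)).det = (pairing φ (A ∘ e')).det := by
    rw [← Matrix.det_transpose, ← Matrix.det_transpose (pairing φ (A ∘ e'))]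
    refine Matrix.det_eq_of_forall_row_eq_smul_add_const (fun j => if j = p then 0 else t j) p
      (by simp) fun j i => ?_
    by_cases hj : j = p <;> simp [pairing, he', hj]
  rw [hdet, Matrix.det_succ_column _ p]
  have hterm : ∀ i : Fin (l + 1), |(-1) ^ (i + p : ℕ) * pairing φ (A ∘ e') i p *
      ((pairing φ (A ∘ e')).submatrix i.succAbove p.succAbove).det| ≤
      ‖A‖ * (2 ^ l * ((l : ℝ) ^ l * volGrowthOn l A G)) := by
    intro i
    set x : Fin l → V := fun j => (2 : ℝ)⁻¹ • e' (p.succAbove j) with hx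
    have hsub : (pairing φ (A ∘ e')).submatrix i.succAbove p.succAbove =
        (2 : ℝ) • pairing (fun a => φ (i.succAbove a)) (A ∘ x) := by
      ext a b
      simp [pairing, hx]
    have hxe : ∀ j, e' (p.succAbove j) = e (p.succAbove j) - t (p.succAbove j) • e p := by
      intro j
      simp [he', Fin.succAbove_ne]
    have h1 := abs_det_le_volGrowthOn A G x ?_ ?_ (fun a => φ (i.succAbove a)) fun a => hφ _
    · have h2 : |pairing φ (A ∘ e') i p| ≤ ‖A‖ := by
        have : pairing φ (A ∘ e') i p = φ i (A (e p)) := by simp [pairing, he']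
        rw [this]
        calc |φ i (A (e p))| ≤ ‖φ i‖ * ‖A (e p)‖ := (φ i).le_opNorm _
          _ ≤ 1 * ‖A‖ := by
            gcongr
            · exact hφ i
            · simpa using A.le_opNorm_of_le (he p)
          _ = ‖A‖ := one_mul _
      rw [hsub, Matrix.det_smul, Fintype.card_fin, abs_mul, abs_mul, abs_mul, abs_pow, abs_neg,
        abs_one, one_pow, one_mul, abs_of_nonneg (by positivity : (0 : ℝ) ≤ 2 ^ l)]
      gcongr
    · intro j
      refine G.smul_mem _ ?_
      rw [hxe, hG, LinearMap.mem_ker]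
      change f (A (e (p.succAbove j) - t (p.succAbove j) • e p)) = 0
      rw [map_sub, map_sub, map_smul, map_smul, smul_eq_mul, ← hft, sub_self]
    · intro j
      rw [hx, norm_smul, hxe]
      have h3 : ‖e (p.succAbove j) - t (p.succAbove j) • e p‖ ≤ 1 + 1 * 1 := by
        refine (norm_sub_le _ _).trans (add_le_add (he _) ?_)
        rw [norm_smul]
        exact mul_le_mul (ht1 _) (he p) (norm_nonneg _) zero_le_one
      rw [Real.norm_of_nonneg (by positivity)]
      linarith
  refine (Finset.abs_sum_le_sum_abs _ _).trans ((Finset.sum_le_sum fun i _ => hterm i).trans ?_)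
  simp

/-! ### Complements of lines -/

/-- A functional that does not vanish at `x` has kernel complementary to the line through `x`. -/
lemma isCompl_span_ker (f : W →L[ℝ] ℝ) (x : W) (hx : f x ≠ 0) :
    IsCompl (Submodule.span ℝ {x}) (LinearMap.ker f.toLinearMap) := by
  refine IsCompl.of_eq ?_ ?_
  · rw [Submodule.eq_bot_iff]
    rintro y ⟨hy1, hy2⟩
    obtain ⟨c, rfl⟩ := Submodule.mem_span_singleton.mp hy1
    have h : f (c • x) = 0 := hy2
    rw [map_smul, smul_eq_mul] at h
    rw [(mul_eq_zero.mp h).resolve_right hx, zero_smul]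
  · rw [eq_top_iff]
    intro y _
    refine Submodule.mem_sup.mpr ⟨(f y / f x) • x, Submodule.mem_span_singleton.mpr ⟨_, rfl⟩,
      y - (f y / f x) • x, ?_, by abel⟩
    change f (y - (f y / f x) • x) = 0
    rw [map_sub, map_smul, smul_eq_mul, div_mul_cancel₀ _ hx, sub_self]

end PareOff

/-- **Lemma 2.12 (paring off one dimension).** -/
theorem pare_off_one_dimension :
    ∃ C : ℕ → ℝ, (∀ l : ℕ, 1 ≤ l → 0 < C l) ∧
    ∀ (V : Type u) (W : Type v),
    ∀ (_ : NormedAddCommGroup V) (_ : NormedSpace ℝ V) (_ : CompleteSpace V)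
      (_ : NormedAddCommGroup W) (_ : NormedSpace ℝ W) (_ : CompleteSpace W),
    ∀ (A : V →L[ℝ] W) (v : V),
      A ≠ 0 → ‖v‖ = 1 → A v ≠ 0 →
      ∃ (G : Submodule ℝ V) (G' : Submodule ℝ W),
        IsClosed (G : Set V) ∧ IsClosed (G' : Set W) ∧
        IsCompl (Submodule.span ℝ {v}) G ∧
        IsCompl (Submodule.span ℝ {A v}) G' ∧
        G.map A.toLinearMap ≤ G' ∧
        (∃ π, IsProjOn π (Submodule.span ℝ {v}) G ∧ ‖π‖ ≤ gelfand 1 A / ‖A v‖) ∧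
        (∃ π', IsProjOn π' (Submodule.span ℝ {A v}) G' ∧ ‖π'‖ = 1) ∧
        ∀ l : ℕ, 1 ≤ l →
          (C l)⁻¹ * (volGrowth (l+1) A / gelfand 1 A) ≤ volGrowthOn l A G ∧
          volGrowthOn l A G ≤ C l * (volGrowth (l+1) A / ‖A v‖) := by
  refine ⟨fun l => (l : ℝ) ^ l * ((l + 1 : ℕ) : ℝ) ^ (l + 1) * (l + 1) * 2 ^ l, ?_, ?_⟩
  · intro l hl
    have : (0 : ℝ) < l := by exact_mod_cast hl
    positivity
  intro V W _ _ _ _ _ _ A v hA hv hAv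
  have hAv0 : 0 < ‖A v‖ := norm_pos_iff.mpr hAv
  have hA0 : 0 < ‖A‖ := norm_pos_iff.mpr hA
  obtain ⟨f, hf1, hfv⟩ := exists_dual_vector ℝ (A v) hAv0.ne'
  replace hfv : f (A v) = ‖A v‖ := hfv
  refine ⟨LinearMap.ker (f.comp A).toLinearMap, LinearMap.ker f.toLinearMap,
    (f.comp A).isClosed_ker, f.isClosed_ker,
    isCompl_span_ker (f.comp A) v (by simpa [hfv] using hAv),
    isCompl_span_ker f (A v) (by simpa [hfv] using hAv), ?_, ?_, ?_, ?_⟩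
  · rintro _ ⟨x, hx, rfl⟩
    exact hx
  · refine ⟨(‖A v‖⁻¹ • f.comp A).smulRight v, ⟨?_, ?_⟩, ?_⟩
    · intro x hx
      obtain ⟨c, rfl⟩ := Submodule.mem_span_singleton.mp hx
      simp [hfv, hAv]
    · intro x hx
      have hx0 : f (A x) = 0 := hx
      simp [hx0]
    · rw [ContinuousLinearMap.norm_smulRight_apply, hv, mul_one, norm_smul, norm_inv, norm_norm,
        gelfand_one, div_eq_inv_mul]
      gcongr
      simpa [hf1] using f.opNorm_comp_le A
  · refine ⟨(‖A v‖⁻¹ • f).smulRight (A v), ⟨?_, ?_⟩, ?_⟩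
    · intro x hx
      obtain ⟨c, rfl⟩ := Submodule.mem_span_singleton.mp hx
      simp [hfv, hAv]
    · intro x hx
      have hx0 : f x = 0 := hx
      simp [hx0]
    · rw [ContinuousLinearMap.norm_smulRight_apply, norm_smul, norm_inv, norm_norm, hf1, mul_one,
        inv_mul_cancel₀ hAv0.ne']
  intro l hl
  rw [gelfand_one]
  set G := LinearMap.ker (f.comp A).toLinearMap with hG
  have hl0 : (0 : ℝ) < l := by exact_mod_cast hl
  have hK : (0 : ℝ) < (l : ℝ) ^ l * ((l + 1 : ℕ) : ℝ) ^ (l + 1) * (l + 1) * 2 ^ l := by positivity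
  have hVG := volGrowthOn_nonneg l A G
  have hVA : 0 ≤ volGrowth (l + 1) A := by
    rw [volGrowth_eq_volGrowthOn_top]
    exact volGrowthOn_nonneg _ _ _
  constructor
  · rw [inv_mul_le_iff₀ hK, div_le_iff₀ hA0, volGrowth_eq_volGrowthOn_top]
    refine (volGrowthOn_le A ⊤ (fun e φ _ he hφ => det_le_volGrowthOn_ker A f e φ he hφ)
      (by positivity)).trans (le_of_eq ?_)
    rw [← hG]
    ring
  · have h := volGrowthOn_le (k := l) A G
      (b := ((l + 1 : ℕ) : ℝ) ^ (l + 1) * (volGrowth (l + 1) A / ‖A v‖)) ?_ (by positivity)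
    · refine h.trans ?_
      -- The upper bound only needs the factors `l ^ l` and `(l + 1) ^ (l + 1)` of the constant.
      have h1 : (1 : ℝ) ≤ (l + 1) * 2 ^ l := one_le_mul_of_one_le_of_one_le
        (by linarith) (one_le_pow₀ one_le_two)
      calc (l : ℝ) ^ l * (((l + 1 : ℕ) : ℝ) ^ (l + 1) * (volGrowth (l + 1) A / ‖A v‖))
          ≤ (l : ℝ) ^ l * (((l + 1 : ℕ) : ℝ) ^ (l + 1) * (volGrowth (l + 1) A / ‖A v‖)) *
            ((l + 1) * 2 ^ l) := le_mul_of_one_le_right (by positivity) h1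
        _ = _ := by ring
    · intro e φ heG he hφ
      have h := det_mul_le_volGrowth A v hv f hf1 e φ (fun j => heG j) he hφ
      rw [hfv, abs_of_pos hAv0] at h
      rw [← mul_div_assoc, le_div_iff₀ hAv0, mul_comm]
      exact h
end

section
/- Assume the setup: T is a homeomorphism of a compact topological space X, V a Banach space, A a continuous linear cocycle over T with every A^n_x injective, and for some integer k ≥ 1 and constants K > 0, τ ∈ (0,1) one has max{c_{k+1}(A^n_x), c_{k+1}(A^n_{Tx})} ≤ K τ^n c_k(A^{n+1}_x) for all x ∈ X, n ≥ 1. Suppose further that for each x ∈ X and n ≥ 1 there are given splittings V = E_n(x) ⊕ F_n(x) = E_n'(x) ⊕ F_n'(x) into a k-dimensional and a closed k-codimensional subspace and a constant C_k > 1 such that: A^n_x E_n(x) = E_n'(x), A^n_x F_n(x) ⊆ F_n'(x), m(A^n_x|_{E_n(x)}) ≥ C_k^{-1} c_k(A^n_x), ‖A^n_x|_{F_n(x)}‖ ≤ C_k c_{k+1}(A^n_x), and ‖π_{E_n(x)//F_n(x)}‖ ≤ C_k, ‖π_{E_n'(x)//F_n'(x)}‖ ≤ C_k. Then for every x ∈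 X the limit 𝓔(x) = lim_{n→∞} E_n'(T^{-n} x) exists in the Hausdorff metric d_H on k-dimensional subspaces, the convergence is uniform with respect to x ∈ X, and 𝓔 is equivariant: A_x 𝓔(x) ⊆ 𝓔(Tx) for every x ∈ X. -/
/-!
The subspaces `S n = E'_n(T⁻ⁿ x)` form a geometrically convergent sequence, at a rate independent
of `x`, and the limit inherits equivariance from an approximate equivariance at finite times.

*Consecutive spaces are close* (`step_close`).  Put `y = T^{-(n+1)} x`.  A vector of
`E'_{n+1}(y)` is `w = A^{n+1}_y v` with `v ∈ E_{n+1}(y)`, and also `w = A^n_{Ty} (A_y v)`.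
Splitting `A_y v` along `E_n(Ty) ⊕ F_n(Ty)`, the component of `w` in `F'_n(Ty)` is at most a
constant times `c_{k+1}(A^n_{Ty}) ‖v‖ ≤ K τⁿ c_k(A^{n+1}_y) ‖v‖`, whereas
`‖w‖ ≥ C_k⁻¹ c_k(A^{n+1}_y) ‖v‖`.  Hence the projection onto `E'_n(Ty)` moves `w` by at most
`C τⁿ ‖w‖`.

*Limit* (`exists_limit`).  Once `C τⁿ` is small, this projection is a bijection between two spaces
of dimension `k`, and its inverse is a linear map `S n → S (n+1)` that is `2 C τⁿ`-close to the
inclusion.  Composing these inverses from a fixed time `N` on gives linear maps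
`L m : S N → V` with image `S (N+m)` that converge geometrically to an injective linear map.  The
limit space is its range.

*Equivariance* (`step_equivariant`, `map_le_of_approx`).  Splitting `v ∈ E_n(y)` along
`E_{n+1}(y) ⊕ F_{n+1}(y)` and using `c_k(A^{n+2}_y) ≤ M² c_k(A^n_y)`, where `M` bounds all the
norms `‖A_x‖`, the space `A_x E'_n(T⁻ⁿ x)` is `C τⁿ`-close to `E'_{n+1}(T⁻ⁿ x)`.  Passing to the
limit, `A_x 𝓔(x)` lies in the closure of `𝓔(Tx)`, which is closed, being finite-dimensional.
-/

open Metric Filter MeasureTheory Topology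

section Aux

variable {V : Type*} [NormedAddCommGroup V] [NormedSpace ℝ V]

/-! ### Minimal norms, restricted norms and Gelfand numbers -/

lemma minNorm_mul_le (B : V →L[ℝ] V) (E : Submodule ℝ V) {v : V} (hv : v ∈ E) :
    minNorm B E * ‖v‖ ≤ ‖B v‖ := by
  by_cases h0 : v = 0
  · simp [h0]
  have hpos : 0 < ‖v‖ := norm_pos_iff.mpr h0
  have h1 : minNorm B E ≤ ‖B (‖v‖⁻¹ • v)‖ := by
    refine csInf_le ⟨0, ?_⟩ ⟨‖v‖⁻¹ • v, E.smul_mem _ hv, ?_, rfl⟩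
    · rintro r ⟨w, -, -, rfl⟩
      exact norm_nonneg _
    · rw [norm_smul, norm_inv, norm_norm, inv_mul_cancel₀ hpos.ne']
  rw [map_smul, norm_smul, norm_inv, norm_norm] at h1
  calc minNorm B E * ‖v‖ ≤ (‖v‖⁻¹ * ‖B v‖) * ‖v‖ := by gcongr
    _ = ‖B v‖ := by field_simp

lemma restrNorm_nonneg (B : V →L[ℝ] V) (F : Submodule ℝ V) : 0 ≤ restrNorm B F :=
  norm_nonneg (B.comp F.subtypeL)

lemma norm_le_restrNorm_mul (B : V →L[ℝ] V) (F : Submodule ℝ V) {v : V} (hv : v ∈ F) :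
    ‖B v‖ ≤ restrNorm B F * ‖v‖ := by
  simpa [restrNorm] using (B.comp F.subtypeL).le_opNorm ⟨v, hv⟩

lemma gelfand_nonneg (k : ℕ) (B : V →L[ℝ] V) : 0 ≤ gelfand k B := by
  refine Real.sInf_nonneg ?_
  rintro r ⟨F, -, rfl⟩
  exact restrNorm_nonneg _ _

lemma gelfand_comp_le (k : ℕ) (B D : V →L[ℝ] V) {M : ℝ} (hM : 0 < M) (hB : ‖B‖ ≤ M) :
    gelfand k (B.comp D) ≤ M * gelfand k D := by
  by_cases hne : ∃ F : Submodule ℝ V, ClosedCodim F (k - 1)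
  · obtain ⟨F₀, hF₀⟩ := hne
    rw [← div_le_iff₀' hM]
    refine le_csInf ⟨_, F₀, hF₀, rfl⟩ ?_
    rintro r ⟨F, hF, rfl⟩
    rw [div_le_iff₀' hM]
    have h1 : gelfand k (B.comp D) ≤ restrNorm (B.comp D) F := by
      refine csInf_le ⟨0, ?_⟩ ⟨F, hF, rfl⟩
      rintro r ⟨F, -, rfl⟩
      exact restrNorm_nonneg _ _
    refine h1.trans ?_
    calc restrNorm (B.comp D) F = ‖B.comp (D.comp F.subtypeL)‖ := rfl
      _ ≤ ‖B‖ * ‖D.comp F.subtypeL‖ := ContinuousLinearMap.opNorm_comp_le _ _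
      _ ≤ M * restrNorm D F := by
          unfold restrNorm
          gcongr
  · -- Without subspaces of codimension `k - 1` both infima are over the empty set, hence `0`.
    have h0 : ∀ D : V →L[ℝ] V, gelfand k D = 0 := by
      intro D
      have : {r : ℝ | ∃ F : Submodule ℝ V, ClosedCodim F (k - 1) ∧ r = restrNorm D F} = ∅ := by
        ext r
        simp only [Set.mem_ofPred_eq, Set.mem_empty_iff_false, iff_false]
        rintro ⟨F, hF, -⟩
        exact hne ⟨F, hF⟩
      simp [gelfand, this]
    simp [h0]

/-! ### Approximation between subspaces -/

/-- Every vector `p` of `P` lies within `δ ‖p‖` of some vector of `Q`. -/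
def ApproxIn (P Q : Submodule ℝ V) (δ : ℝ) : Prop :=
  ∀ p ∈ P, ∃ q ∈ Q, ‖p - q‖ ≤ δ * ‖p‖

lemma ApproxIn.exists_sphere {P Q : Submodule ℝ V} {δ : ℝ} (h : ApproxIn P Q δ) (hδ : δ < 1)
    {p : V} (hp : p ∈ subSphere P) : ∃ q ∈ subSphere Q, dist p q ≤ 2 * δ := by
  obtain ⟨q, hq, hpq⟩ := h p hp.1
  rw [hp.2, mul_one] at hpq
  have h1 : |‖p‖ - ‖q‖| ≤ δ := (abs_norm_sub_norm_le p q).trans hpq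
  rw [hp.2, abs_le] at h1
  have hpos : 0 < ‖q‖ := by linarith
  refine ⟨‖q‖⁻¹ • q, ⟨Q.smul_mem _ hq, ?_⟩, ?_⟩
  · rw [norm_smul, norm_inv, norm_norm, inv_mul_cancel₀ hpos.ne']
  have h2 : ‖q - ‖q‖⁻¹ • q‖ ≤ δ := by
    have : q - ‖q‖⁻¹ • q = (1 - ‖q‖⁻¹) • q := by rw [sub_smul, one_smul]
    rw [this, norm_smul, Real.norm_eq_abs]
    have h3 : |1 - ‖q‖⁻¹| * ‖q‖ = |‖q‖ - 1| := by
      rw [← abs_of_pos hpos, ← abs_mul, abs_of_pos hpos, sub_mul, inv_mul_cancel₀ hpos.ne', one_mul]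
    rw [h3, abs_le]
    constructor <;> linarith
  calc dist p (‖q‖⁻¹ • q) = ‖(p - q) + (q - ‖q‖⁻¹ • q)‖ := by rw [dist_eq_norm]; congr 1; abel
    _ ≤ ‖p - q‖ + ‖q - ‖q‖⁻¹ • q‖ := norm_add_le _ _
    _ ≤ 2 * δ := by linarith

lemma dHaus_le {P Q : Submodule ℝ V} {δ : ℝ} (hδ0 : 0 ≤ δ) (hδ : δ < 1)
    (h₁ : ApproxIn P Q δ) (h₂ : ApproxIn Q P δ) : dHaus P Q ≤ 2 * δ :=
  Metric.hausdorffDist_le_of_mem_dist (by positivity)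
    (fun _ hp => h₁.exists_sphere hδ hp) (fun _ hq => h₂.exists_sphere hδ hq)

/-- A linear map `P : S₂ → S₁` that moves vectors by at most `δ ≤ 1/2` times their norm is a
bijection between spaces of equal dimension; `g` extends its inverse. -/
lemma exists_inverse_step {S₁ S₂ : Submodule ℝ V} [FiniteDimensional ℝ S₁]
    [FiniteDimensional ℝ S₂] (hdim : Module.finrank ℝ S₁ = Module.finrank ℝ S₂)
    (P : V →ₗ[ℝ] V) (hP : ∀ w ∈ S₂, P w ∈ S₁) {δ : ℝ} (hδ0 : 0 ≤ δ) (hδ : δ ≤ 1 / 2)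
    (hclose : ∀ w ∈ S₂, ‖w - P w‖ ≤ δ * ‖w‖) :
    ∃ g : V →ₗ[ℝ] V, S₁.map g = S₂ ∧ ∀ s ∈ S₁, ‖g s - s‖ ≤ 2 * δ * ‖s‖ := by
  have hlow : ∀ w ∈ S₂, ‖w‖ ≤ 2 * ‖P w‖ := by
    intro w hw
    have h1 := hclose w hw
    have h2 : ‖w‖ - ‖P w‖ ≤ ‖w - P w‖ := norm_sub_norm_le _ _
    nlinarith [norm_nonneg w]
  set f : S₂ →ₗ[ℝ] S₁ := P.restrict hP with hf
  have hfapp : ∀ w : S₂, ((f w : S₁) : V) = P w := fun w => rfl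
  have hinj : Function.Injective f := by
    rw [← LinearMap.ker_eq_bot, LinearMap.ker_eq_bot']
    intro w hw
    have h1 := hlow w w.2
    rw [← hfapp, hw] at h1
    have : ‖(w : V)‖ = 0 := le_antisymm (by simpa using h1) (norm_nonneg _)
    exact Subtype.ext (norm_eq_zero.mp this)
  let e : S₂ ≃ₗ[ℝ] S₁ := LinearEquiv.ofInjectiveOfFinrankEq f hinj hdim.symm
  have he : ∀ w : S₂, e w = f w := fun w => rfl
  obtain ⟨g, hg⟩ := LinearMap.exists_extend (S₂.subtype ∘ₗ (e.symm : S₁ →ₗ[ℝ] S₂))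
  have hgapp : ∀ s : S₁, g s = (e.symm s : V) := fun s => LinearMap.congr_fun hg s
  refine ⟨g, ?_, ?_⟩
  · ext w
    constructor
    · rintro ⟨s, hs, rfl⟩
      have := hgapp ⟨s, hs⟩
      simp only at this
      rw [this]
      exact (e.symm _).2
    · intro hw
      refine ⟨e ⟨w, hw⟩, (e _).2, ?_⟩
      rw [hgapp, e.symm_apply_apply]
  · intro s hs
    obtain ⟨w, hw⟩ := e.surjective ⟨s, hs⟩
    have hgs : g s = w := by
      have := hgapp ⟨s, hs⟩
      rw [← hw, e.symm_apply_apply, hw] at this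
      exact this
    have hPw : P w = s := by
      rw [← hfapp, ← he, hw]
    have h1 := hclose w w.2
    have h2 := hlow w w.2
    rw [hPw] at h1 h2
    rw [hgs]
    calc ‖(w : V) - s‖ ≤ δ * ‖(w : V)‖ := h1
      _ ≤ δ * (2 * ‖s‖) := by gcongr
      _ = 2 * δ * ‖s‖ := by ring

/-! ### The limit of a sequence of subspaces -/

/-- The time `N`, with `8 C τ^N ≤ 1 - τ`, enters as data, so that the rate depends on `C` and `τ`
only. -/
lemma exists_limit [CompleteSpace V] {k : ℕ} {C τ : ℝ} (hC : 0 ≤ C) (hτ : τ ∈ Set.Ioo (0 : ℝ) 1)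
    (S : ℕ → Submodule ℝ V) {N : ℕ} (hN : 8 * C * τ ^ N ≤ 1 - τ)
    (hS : ∀ n, N ≤ n → FiniteDimensional ℝ (S n) ∧ Module.finrank ℝ (S n) = k)
    (hP : ∀ n, N ≤ n → ∃ P : V →ₗ[ℝ] V, ∀ w ∈ S (n + 1),
      P w ∈ S n ∧ ‖w - P w‖ ≤ C * τ ^ n * ‖w‖) :
    ∃ Q : Submodule ℝ V, (FiniteDimensional ℝ Q ∧ Module.finrank ℝ Q = k) ∧
      ∀ m, ApproxIn (S (N + m)) Q (τ ^ m) ∧ ApproxIn Q (S (N + m)) (τ ^ m) := by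
  obtain ⟨hτ0, hτ1⟩ := hτ
  have hstep : ∀ m, ∃ g : V →ₗ[ℝ] V, (S (N + m)).map g = S (N + m + 1) ∧
      ∀ s ∈ S (N + m), ‖g s - s‖ ≤ (1 - τ) / 4 * τ ^ m * ‖s‖ := by
    intro m
    obtain ⟨P, hPm⟩ := hP (N + m) (by omega)
    obtain ⟨hfd₁, hdim₁⟩ := hS (N + m) (by omega)
    obtain ⟨hfd₂, hdim₂⟩ := hS (N + m + 1) (by omega)
    have hpow0 : 0 < τ ^ m := pow_pos hτ0 m
    have hpow : τ ^ m ≤ 1 := pow_le_one₀ hτ0.le hτ1.le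
    have hbd : C * τ ^ (N + m) ≤ (1 - τ) / 8 * τ ^ m := by
      rw [pow_add]
      nlinarith
    obtain ⟨g, hg, hgs⟩ := exists_inverse_step (hdim₁.trans hdim₂.symm) P
      (fun w hw => (hPm w hw).1) (δ := C * τ ^ (N + m)) (by positivity)
      (by nlinarith) (fun w hw => (hPm w hw).2)
    refine ⟨g, hg, fun s hs => (hgs s hs).trans ?_⟩
    exact mul_le_mul_of_nonneg_right (by linarith) (norm_nonneg s)
  choose g hg hgs using hstep
  let L : ℕ → V →ₗ[ℝ] V := fun m => Nat.rec LinearMap.id (fun m Lm => g m ∘ₗ Lm) m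
  have hL0 : ∀ v, L 0 v = v := fun v => rfl
  have hLs : ∀ m v, L (m + 1) v = g m (L m v) := fun m v => rfl
  have hLmap : ∀ m, (S N).map (L m) = S (N + m) := by
    intro m
    induction m with
    | zero => exact Submodule.map_id _
    | succ m ih =>
      have : L (m + 1) = g m ∘ₗ L m := rfl
      rw [this, Submodule.map_comp, ih, hg]
      rfl
  have hLmem : ∀ m, ∀ v ∈ S N, L m v ∈ S (N + m) := by
    intro m v hv
    rw [← hLmap m]
    exact Submodule.mem_map_of_mem hv
  have hLid : ∀ m, ∀ v ∈ S N, ‖L m v - v‖ ≤ 1 / 2 * (1 - τ ^ m) * ‖v‖ ∧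
      ‖L (m + 1) v - L m v‖ ≤ 1 / 2 * (1 - τ) * τ ^ m * ‖v‖ := by
    intro m v hv
    have hinc : ∀ m, ‖L m v - v‖ ≤ 1 / 2 * (1 - τ ^ m) * ‖v‖ →
        ‖L (m + 1) v - L m v‖ ≤ 1 / 2 * (1 - τ) * τ ^ m * ‖v‖ := by
      intro m h
      have hpow0 : 0 < τ ^ m := pow_pos hτ0 m
      have h1 : ‖L m v‖ ≤ 2 * ‖v‖ := by
        have : ‖L m v‖ - ‖v‖ ≤ ‖L m v - v‖ := norm_sub_norm_le _ _
        nlinarith [norm_nonneg v]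
      have h2 := hgs m _ (hLmem m v hv)
      rw [hLs]
      refine h2.trans ?_
      have : 0 ≤ (1 - τ) / 4 * τ ^ m := by
        have : 0 < 1 - τ := by linarith
        positivity
      calc (1 - τ) / 4 * τ ^ m * ‖L m v‖ ≤ (1 - τ) / 4 * τ ^ m * (2 * ‖v‖) := by gcongr
        _ = _ := by ring
    have hmain : ∀ m, ‖L m v - v‖ ≤ 1 / 2 * (1 - τ ^ m) * ‖v‖ := by
      intro m
      induction m with
      | zero => simp [hL0]
      | succ m ih =>
        have h1 := hinc m ih
        have h2 : ‖L (m + 1) v - v‖ ≤ ‖L (m + 1) v - L m v‖ + ‖L m v - v‖ :=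
          norm_sub_le_norm_sub_add_norm_sub _ _ _
        rw [pow_succ]
        linarith
    exact ⟨hmain m, hinc m (hmain m)⟩
  have hdist : ∀ v ∈ S N, ∀ m, dist (L m v) (L (m + 1) v) ≤
      (1 / 2 * (1 - τ) * ‖v‖) * τ ^ m := by
    intro v hv m
    rw [dist_comm, dist_eq_norm]
    linarith [(hLid m v hv).2]
  have hlim : ∀ v : S N, ∃ l, Tendsto (fun m => L m v) atTop (𝓝 l) := fun v =>
    cauchySeq_tendsto_of_complete (cauchySeq_of_le_geometric τ _ hτ1 (hdist v v.2))
  choose l hl using hlim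
  let Λ : S N →ₗ[ℝ] V :=
    { toFun := l
      map_add' := fun v w => tendsto_nhds_unique (hl (v + w)) (by
        simpa using (hl v).add (hl w))
      map_smul' := fun c v => tendsto_nhds_unique (hl (c • v)) (by
        simpa using (hl v).const_smul c) }
  have hΛ : ∀ v, Λ v = l v := fun v => rfl
  have hrate : ∀ (v : S N) m, ‖L m v - Λ v‖ ≤ 1 / 2 * τ ^ m * ‖(v : V)‖ := by
    intro v m
    have h := dist_le_of_le_geometric_of_tendsto τ _ hτ1 (hdist v v.2) (hl v) m
    rw [dist_eq_norm] at h
    refine h.trans (le_of_eq ?_)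
    have : 1 - τ ≠ 0 := by linarith
    field_simp
  have hlowL : ∀ (v : S N) m, ‖(v : V)‖ ≤ 2 * ‖L m v‖ := by
    intro v m
    have h1 := (hLid m v v.2).1
    have h2 : ‖(v : V)‖ - ‖L m v‖ ≤ ‖L m v - v‖ := by
      rw [norm_sub_rev]
      exact norm_sub_norm_le _ _
    nlinarith [norm_nonneg (v : V), pow_pos hτ0 m]
  have hlowΛ : ∀ v : S N, ‖(v : V)‖ ≤ 2 * ‖Λ v‖ := fun v =>
    ge_of_tendsto' ((hl v).norm.const_mul 2) (fun m => hlowL v m)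
  have hΛinj : Function.Injective Λ := by
    rw [← LinearMap.ker_eq_bot, LinearMap.ker_eq_bot']
    intro v hv
    have h1 := hlowΛ v
    rw [hv, norm_zero, mul_zero] at h1
    exact Subtype.ext (norm_eq_zero.mp (le_antisymm h1 (norm_nonneg _)))
  obtain ⟨hfd, hdim⟩ := hS N le_rfl
  refine ⟨LinearMap.range Λ, ⟨inferInstance, ?_⟩, fun m => ⟨?_, ?_⟩⟩
  · rw [LinearMap.finrank_range_of_inj hΛinj, hdim]
  · intro p hp
    rw [← hLmap m] at hp
    obtain ⟨v, hv, rfl⟩ := hp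
    refine ⟨Λ ⟨v, hv⟩, ⟨_, rfl⟩, (hrate ⟨v, hv⟩ m).trans ?_⟩
    have := hlowL ⟨v, hv⟩ m
    have hpow0 : 0 < τ ^ m := pow_pos hτ0 m
    simp only at this ⊢
    nlinarith
  · rintro _ ⟨v, rfl⟩
    refine ⟨L m v, hLmem m v v.2, ?_⟩
    rw [norm_sub_rev]
    refine (hrate v m).trans ?_
    have := hlowΛ v
    have hpow0 : 0 < τ ^ m := pow_pos hτ0 m
    nlinarith

/-! ### Estimates for a single splitting -/

/-- The `F'`-component of `B u` is controlled by the norm of `B` on `F`. -/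
lemma exists_component {B π : V →L[ℝ] V} {E F E' F' : Submodule ℝ V} {C R : ℝ}
    (hc : IsCompl E F) (hE : E.map B.toLinearMap = E') (hF : F.map B.toLinearMap ≤ F')
    (hπ : IsProjOn π E F) (hπC : ‖π‖ ≤ C) (hR : restrNorm B F ≤ R) (u : V) :
    ∃ e ∈ E', B u - e ∈ F' ∧ ‖B u - e‖ ≤ R * (1 + C) * ‖u‖ := by
  have hu : u ∈ E ⊔ F := by rw [hc.sup_eq_top]; trivial
  obtain ⟨e, he, f, hf, rfl⟩ := Submodule.mem_sup.mp hu
  have hsub : B (e + f) - B e = B f := by rw [map_add]; abel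
  have hπu : π (e + f) = e := by rw [map_add, hπ.1 e he, hπ.2 f hf, add_zero]
  have hfn : ‖f‖ ≤ (1 + C) * ‖e + f‖ := by
    have h1 : f = (e + f) - π (e + f) := by rw [hπu]; abel
    have h2 : ‖π (e + f)‖ ≤ C * ‖e + f‖ :=
      (π.le_opNorm _).trans (by gcongr)
    calc ‖f‖ = ‖(e + f) - π (e + f)‖ := by rw [← h1]
      _ ≤ ‖e + f‖ + ‖π (e + f)‖ := norm_sub_le _ _
      _ ≤ (1 + C) * ‖e + f‖ := by linarith
  have hR0 : 0 ≤ R := (restrNorm_nonneg _ _).trans hR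
  refine ⟨B e, hE ▸ Submodule.mem_map_of_mem (f := B.toLinearMap) he, ?_, ?_⟩
  · rw [hsub]
    exact hF (Submodule.mem_map_of_mem (f := B.toLinearMap) hf)
  · rw [hsub]
    calc ‖B f‖ ≤ restrNorm B F * ‖f‖ := norm_le_restrNorm_mul B F hf
      _ ≤ R * ((1 + C) * ‖e + f‖) := by gcongr
      _ = _ := by ring

/-! ### Passing equivariance to the limit -/

lemma map_le_of_approx {B : V →L[ℝ] V} {Q Q' : Submodule ℝ V} [FiniteDimensional ℝ Q']
    {S S' : ℕ → Submodule ℝ V} {C τ : ℝ} (hτ : τ ∈ Set.Ioo (0 : ℝ) 1) (hC : 0 ≤ C)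
    (hQ : ∀ m, ApproxIn Q (S m) (τ ^ m)) (hQ' : ∀ m, ApproxIn (S' m) Q' (τ ^ m))
    (hB : ∀ m, ∀ w ∈ S m, ∃ w' ∈ S' m, ‖B w - w'‖ ≤ C * τ ^ m * ‖w‖) :
    Q.map B.toLinearMap ≤ Q' := by
  obtain ⟨hτ0, hτ1⟩ := hτ
  rintro _ ⟨u, hu, rfl⟩
  have hclosed : IsClosed (Q' : Set V) := Q'.closed_of_finiteDimensional
  -- `D` collects the errors of the three approximations, all of order `τ ^ m`.
  set D : ℝ := ‖B‖ * ‖u‖ + C * (2 * ‖u‖) + (‖B‖ * (2 * ‖u‖) + C * (2 * ‖u‖)) with hD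
  have key : ∀ m, ∃ q ∈ Q', ‖q - B u‖ ≤ D * τ ^ m := by
    intro m
    have ht0 : 0 < τ ^ m := pow_pos hτ0 m
    have ht1 : τ ^ m ≤ 1 := pow_le_one₀ hτ0.le hτ1.le
    obtain ⟨w, hw, hwu⟩ := hQ m u hu
    obtain ⟨w', hw', hww'⟩ := hB m w hw
    obtain ⟨q, hq, hqw⟩ := hQ' m w' hw'
    have hwn : ‖w‖ ≤ 2 * ‖u‖ := by
      have : ‖w‖ - ‖u‖ ≤ ‖u - w‖ := by rw [norm_sub_rev]; exact norm_sub_norm_le _ _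
      nlinarith [norm_nonneg u]
    have hww : ‖B w - w'‖ ≤ C * (2 * ‖u‖) * τ ^ m := by
      refine hww'.trans ?_
      calc C * τ ^ m * ‖w‖ ≤ C * τ ^ m * (2 * ‖u‖) := by gcongr
        _ = _ := by ring
    have hw'n : ‖w'‖ ≤ ‖B‖ * (2 * ‖u‖) + C * (2 * ‖u‖) := by
      have h1 : ‖w'‖ - ‖B w‖ ≤ ‖B w - w'‖ := by rw [norm_sub_rev]; exact norm_sub_norm_le _ _
      have h2 : ‖B w‖ ≤ ‖B‖ * (2 * ‖u‖) := (B.le_opNorm _).trans (by gcongr)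
      have h3 : C * (2 * ‖u‖) * τ ^ m ≤ C * (2 * ‖u‖) :=
        mul_le_of_le_one_right (by positivity) ht1
      linarith
    have hBu : ‖B u - B w‖ ≤ ‖B‖ * ‖u‖ * τ ^ m := by
      rw [← map_sub]
      calc ‖B (u - w)‖ ≤ ‖B‖ * ‖u - w‖ := B.le_opNorm _
        _ ≤ ‖B‖ * (τ ^ m * ‖u‖) := by gcongr
        _ = _ := by ring
    have hq' : ‖w' - q‖ ≤ (‖B‖ * (2 * ‖u‖) + C * (2 * ‖u‖)) * τ ^ m := by
      refine hqw.trans ?_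
      rw [mul_comm]
      gcongr
    refine ⟨q, hq, ?_⟩
    rw [norm_sub_rev]
    calc ‖B u - q‖ = ‖(B u - B w) + (B w - w') + (w' - q)‖ := by congr 1; abel
      _ ≤ ‖B u - B w‖ + ‖B w - w'‖ + ‖w' - q‖ := norm_add₃_le
      _ ≤ D * τ ^ m := by rw [hD]; linarith
  choose q hq hqd using key
  have hlim : Tendsto q atTop (𝓝 (B u)) := by
    rw [tendsto_iff_norm_sub_tendsto_zero]
    refine squeeze_zero (fun _ => norm_nonneg _) hqd ?_
    simpa using (tendsto_pow_atTop_nhds_zero_of_lt_one hτ0.le hτ1).const_mul D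
  exact hclosed.mem_of_tendsto hlim (Eventually.of_forall hq)

/-! ### The two estimates for the cocycle -/

/-- `B₁ = A^{n+1}_y`, `B = A^n_{Ty}`, `D = A_y`: the projection onto `E'_n(Ty)` almost fixes
`E'_{n+1}(y)`.  Here `c` stands for `c_k(A^{n+1}_y)`. -/
lemma step_close {B₁ B D π π' : V →L[ℝ] V} {E₁ E₁' E F E' F' : Submodule ℝ V}
    {C c t M : ℝ} (hC : 1 < C) (hM : 0 < M) (ht : 0 ≤ t)
    (hB₁ : B₁ = B.comp D) (hD : ‖D‖ ≤ M)
    (hE₁ : E₁.map B₁.toLinearMap = E₁') (hmin : C⁻¹ * c ≤ minNorm B₁ E₁)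
    (hc : IsCompl E F) (hE : E.map B.toLinearMap = E') (hF : F.map B.toLinearMap ≤ F')
    (hπ : IsProjOn π E F) (hπC : ‖π‖ ≤ C) (hπ' : IsProjOn π' E' F')
    (hR : restrNorm B F ≤ C * (t * c)) {w : V} (hw : w ∈ E₁') :
    π' w ∈ E' ∧ ‖w - π' w‖ ≤ C * C * (1 + C) * M * t * ‖w‖ := by
  subst hE₁
  obtain ⟨v, hv, rfl⟩ := hw
  obtain ⟨e, he, hf, hbd⟩ := exists_component hc hE hF hπ hπC hR (D v)
  have hBv : B₁ v = B (D v) := by rw [hB₁]; rfl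
  have hfix : π' (B₁ v) = e := by
    have : B₁ v = e + (B (D v) - e) := by rw [hBv]; abel
    rw [this, map_add, hπ'.1 e he, hπ'.2 _ hf, add_zero]
  change π' (B₁ v) ∈ E' ∧ ‖B₁ v - π' (B₁ v)‖ ≤ C * C * (1 + C) * M * t * ‖B₁ v‖
  rw [hfix]
  refine ⟨he, ?_⟩
  have hC0 : 0 < C := by linarith
  have hlow : c * ‖v‖ ≤ C * ‖B₁ v‖ := by
    have h1 : C⁻¹ * c * ‖v‖ ≤ ‖B₁ v‖ :=
      (mul_le_mul_of_nonneg_right hmin (norm_nonneg _)).trans (minNorm_mul_le B₁ E₁ hv)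
    calc c * ‖v‖ = C * (C⁻¹ * c * ‖v‖) := by field_simp
      _ ≤ C * ‖B₁ v‖ := by gcongr
  have hR0 : 0 ≤ C * (t * c) := (restrNorm_nonneg _ _).trans hR
  have hDv : ‖D v‖ ≤ M * ‖v‖ := (D.le_opNorm v).trans (by gcongr)
  rw [hBv] at hlow ⊢
  calc ‖B (D v) - e‖ ≤ C * (t * c) * (1 + C) * ‖D v‖ := hbd
    _ ≤ C * (t * c) * (1 + C) * (M * ‖v‖) := by gcongr
    _ = C * t * (1 + C) * M * (c * ‖v‖) := by ring
    _ ≤ C * t * (1 + C) * M * (C * ‖B (D v)‖) := by gcongr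
    _ = _ := by ring

/-- `B₀ = A^n_y`, `D = A_x`, `B = A^{n+1}_y` with `x = T^n y`: the image under `A_x` of `E'_n(y)`
is close to `E'_{n+1}(y)`.  Here `c` stands for `c_k(A^n_y)`. -/
lemma step_equivariant {B₀ B D π : V →L[ℝ] V} {E₀ E₀' E F E' F' : Submodule ℝ V}
    {C c t : ℝ} (hC : 1 < C) (ht : 0 ≤ t) (hB : B = D.comp B₀)
    (hE₀ : E₀.map B₀.toLinearMap = E₀') (hmin : C⁻¹ * c ≤ minNorm B₀ E₀)
    (hc : IsCompl E F) (hE : E.map B.toLinearMap = E') (hF : F.map B.toLinearMap ≤ F')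
    (hπ : IsProjOn π E F) (hπC : ‖π‖ ≤ C)
    (hR : restrNorm B F ≤ C * (t * c)) {w : V} (hw : w ∈ E₀') :
    ∃ w' ∈ E', ‖D w - w'‖ ≤ C * C * (1 + C) * t * ‖w‖ := by
  subst hE₀
  obtain ⟨v, hv, rfl⟩ := hw
  obtain ⟨e, he, -, hbd⟩ := exists_component hc hE hF hπ hπC hR v
  refine ⟨e, he, ?_⟩
  have hC0 : 0 < C := by linarith
  have hlow : c * ‖v‖ ≤ C * ‖B₀ v‖ := by
    have h1 : C⁻¹ * c * ‖v‖ ≤ ‖B₀ v‖ :=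
      (mul_le_mul_of_nonneg_right hmin (norm_nonneg _)).trans (minNorm_mul_le B₀ E₀ hv)
    calc c * ‖v‖ = C * (C⁻¹ * c * ‖v‖) := by field_simp
      _ ≤ C * ‖B₀ v‖ := by gcongr
  have hBv : B v = D (B₀ v) := by rw [hB]; rfl
  change ‖D (B₀ v) - e‖ ≤ C * C * (1 + C) * t * ‖B₀ v‖
  rw [← hBv]
  calc ‖B v - e‖ ≤ C * (t * c) * (1 + C) * ‖v‖ := hbd
    _ = C * t * (1 + C) * (c * ‖v‖) := by ring
    _ ≤ C * t * (1 + C) * (C * ‖B₀ v‖) := by gcongr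
    _ = _ := by ring

end Aux

/-- **Proposition 3.2 (existence of the upper subspace).** -/
theorem upper_subspace_exists
    {X V : Type*} [TopologicalSpace X] [CompactSpace X]
    [NormedAddCommGroup V] [NormedSpace ℝ V] [CompleteSpace V]
    (T : X ≃ₜ X) (A : X → ℕ → (V →L[ℝ] V))
    (hcoc : IsCocycle (⇑T) A)
    (hcont : Continuous fun x => A x 1)
    (hinj : ∀ x n, Function.Injective (A x n))
    (k : ℕ) (hk : 1 ≤ k) (K τ : ℝ) (hK : 0 < K) (hτ : τ ∈ Set.Ioo (0:ℝ) 1)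
    (hgap : ∀ x : X, ∀ n : ℕ, 1 ≤ n →
      max (gelfand (k+1) (A x n)) (gelfand (k+1) (A (T x) n)) ≤
        K * τ ^ n * gelfand k (A x (n+1)))
    (E F E' F' : X → ℕ → Submodule ℝ V) (Ck : ℝ) (hCk : 1 < Ck)
    (hEdim : ∀ x : X, ∀ n : ℕ, 1 ≤ n →
      FiniteDimensional ℝ ↥(E x n) ∧ Module.finrank ℝ ↥(E x n) = k)
    (hFcodim : ∀ x : X, ∀ n : ℕ, 1 ≤ n → ClosedCodim (F x n) k)
    (hF'codim : ∀ x : X, ∀ n : ℕ, 1 ≤ n → ClosedCodim (F' x n) k)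
    (hsplit : ∀ x : X, ∀ n : ℕ, 1 ≤ n →
      IsCompl (E x n) (F x n) ∧ IsCompl (E' x n) (F' x n))
    (hmapE : ∀ x : X, ∀ n : ℕ, 1 ≤ n → (E x n).map (A x n).toLinearMap = E' x n)
    (hmapF : ∀ x : X, ∀ n : ℕ, 1 ≤ n → (F x n).map (A x n).toLinearMap ≤ F' x n)
    (hmin : ∀ x : X, ∀ n : ℕ, 1 ≤ n →
      Ck⁻¹ * gelfand k (A x n) ≤ minNorm (A x n) (E x n))
    (hrestr : ∀ x : X, ∀ n : ℕ, 1 ≤ n →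
      restrNorm (A x n) (F x n) ≤ Ck * gelfand (k+1) (A x n))
    (hproj : ∀ x : X, ∀ n : ℕ, 1 ≤ n →
      (∃ π, IsProjOn π (E x n) (F x n) ∧ ‖π‖ ≤ Ck) ∧
      (∃ π', IsProjOn π' (E' x n) (F' x n) ∧ ‖π'‖ ≤ Ck))
    :
    ∃ 𝓔 : X → Submodule ℝ V,
      (∀ x, FiniteDimensional ℝ ↥(𝓔 x) ∧ Module.finrank ℝ ↥(𝓔 x) = k) ∧
      (∀ ε > (0:ℝ), ∃ N : ℕ, ∀ n : ℕ, N ≤ n → ∀ x : X,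
        dHaus (E' ((⇑T.symm)^[n] x) n) (𝓔 x) < ε) ∧
      (∀ x : X, (𝓔 x).map (A x 1).toLinearMap ≤ 𝓔 (T x)) := by
  obtain ⟨hτ0, hτ1⟩ := hτ
  obtain ⟨M, hM, hAM⟩ : ∃ M : ℝ, 0 < M ∧ ∀ x, ‖A x 1‖ ≤ M := by
    obtain ⟨M, hM⟩ := isCompact_univ.exists_bound_of_continuousOn hcont.continuousOn
    exact ⟨max M 1, by positivity, fun x => (hM x trivial).trans (le_max_left _ _)⟩
  have hCk0 : 0 < Ck := by linarith
  have hcocR : ∀ y n, A y (n + 1) = (A (T y) n).comp (A y 1) := fun y n => hcoc.2 y n 1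
  have hcocL : ∀ y n, A y (n + 1) = (A ((⇑T)^[n] y) 1).comp (A y n) := by
    intro y n
    rw [add_comm]
    exact hcoc.2 y 1 n
  have hE'dim : ∀ x : X, ∀ n : ℕ, 1 ≤ n →
      FiniteDimensional ℝ ↥(E' x n) ∧ Module.finrank ℝ ↥(E' x n) = k := by
    intro x n hn
    obtain ⟨hfd, hdim⟩ := hEdim x n hn
    rw [← hmapE x n hn]
    refine ⟨inferInstance, ?_⟩
    rw [← hdim]
    exact (Submodule.equivMapOfInjective (A x n).toLinearMap (hinj x n) (E x n)).finrank_eq.symm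
  -- The two error constants: `C₁` for consecutive spaces, `C₂` for equivariance.
  set C₁ : ℝ := Ck * Ck * (1 + Ck) * M * K with hC₁
  set C₂ : ℝ := Ck * Ck * (1 + Ck) * (K * τ * (M * M)) with hC₂
  have hC₁0 : 0 ≤ C₁ := by positivity
  have hC₂0 : 0 ≤ C₂ := by positivity
  obtain ⟨N, hN1, hN⟩ : ∃ N : ℕ, 1 ≤ N ∧ 8 * C₁ * τ ^ N ≤ 1 - τ := by
    have hlim : Tendsto (fun n : ℕ => 8 * C₁ * τ ^ n) atTop (𝓝 0) := by
      simpa using (tendsto_pow_atTop_nhds_zero_of_lt_one hτ0.le hτ1).const_mul (8 * C₁)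
    have hev := (hlim.eventually_lt_const (show (0 : ℝ) < 1 - τ by linarith)).and
      (eventually_ge_atTop 1)
    obtain ⟨N, h1, h2⟩ := hev.exists
    exact ⟨N, h2, h1.le⟩
  have hlimit : ∀ x, ∃ Q : Submodule ℝ V, (FiniteDimensional ℝ Q ∧ Module.finrank ℝ Q = k) ∧
      ∀ m, ApproxIn (E' ((⇑T.symm)^[N + m] x) (N + m)) Q (τ ^ m) ∧
        ApproxIn Q (E' ((⇑T.symm)^[N + m] x) (N + m)) (τ ^ m) := by
    intro x
    refine exists_limit hC₁0 ⟨hτ0, hτ1⟩ (fun n => E' ((⇑T.symm)^[n] x) n) hN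
      (fun n hn => hE'dim _ n (hN1.trans hn)) ?_
    intro n hn
    have hn1 : 1 ≤ n := hN1.trans hn
    set y := (⇑T.symm)^[n + 1] x with hy
    have hTy : (⇑T.symm)^[n] x = T y := by
      rw [hy, Function.iterate_succ_apply', T.apply_symm_apply]
    obtain ⟨⟨π, hπ, hπC⟩, ⟨π', hπ', -⟩⟩ := hproj (T y) n hn1
    have hR : restrNorm (A (T y) n) (F (T y) n) ≤
        Ck * ((K * τ ^ n) * gelfand k (A y (n + 1))) := by
      refine (hrestr (T y) n hn1).trans ?_
      gcongr
      exact (le_max_right _ _).trans (hgap y n hn1)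
    refine ⟨π'.toLinearMap, fun w hw => ?_⟩
    have hmain := step_close hCk hM (by positivity) (hcocR y n) (hAM y)
      (hmapE y (n + 1) (by omega)) (hmin y (n + 1) (by omega)) (hsplit (T y) n hn1).1
      (hmapE (T y) n hn1) (hmapF (T y) n hn1) hπ hπC hπ' hR hw
    simp only [hTy]
    refine ⟨hmain.1, hmain.2.trans (le_of_eq ?_)⟩
    rw [hC₁]
    ring
  choose 𝓔 hdim hlim using hlimit
  refine ⟨𝓔, hdim, ?_, ?_⟩
  · intro ε hε
    have h0 := tendsto_pow_atTop_nhds_zero_of_lt_one hτ0.le hτ1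
    obtain ⟨m₀, hm₀⟩ := eventually_atTop.mp
      (h0.eventually_lt_const (show (0 : ℝ) < min 1 (ε / 2) by positivity))
    refine ⟨N + m₀, fun n hn x => ?_⟩
    obtain ⟨m, rfl⟩ := Nat.exists_eq_add_of_le (show N ≤ n by omega)
    have hm := hm₀ m (by omega)
    have h1 := hm.trans_le (min_le_left _ _)
    have h2 := hm.trans_le (min_le_right _ _)
    have h3 := dHaus_le (pow_nonneg hτ0.le m) h1 (hlim x m).1 (hlim x m).2
    linarith
  · intro x
    have := (hdim (T x)).1
    -- `E'_{n+1}(T^{-n} x)` is the `(n+1)`-st approximation of `𝓔 (T x)`; the shift by one is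
    -- absorbed by `τ ^ (m + 1) ≤ τ ^ m`.
    refine map_le_of_approx ⟨hτ0, hτ1⟩ hC₂0 (fun m => (hlim x m).2)
      (S' := fun m => E' ((⇑T.symm)^[N + (m + 1)] (T x)) (N + (m + 1))) ?_ ?_
    · intro m p hp
      obtain ⟨q, hq, hpq⟩ := (hlim (T x) (m + 1)).1 p hp
      refine ⟨q, hq, hpq.trans ?_⟩
      have : τ ^ (m + 1) ≤ τ ^ m := pow_le_pow_of_le_one hτ0.le hτ1.le (by omega)
      gcongr
    · intro m w hw
      set n := N + m with hn
      have hn1 : 1 ≤ n := by omega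
      set y := (⇑T.symm)^[n] x with hy
      have hyT : (⇑T.symm)^[N + (m + 1)] (T x) = y := by
        rw [← add_assoc, Function.iterate_succ_apply, T.symm_apply_apply]
      have hTny : (⇑T)^[n] y = x :=
        Function.LeftInverse.iterate (fun z => T.apply_symm_apply z) n x
      obtain ⟨⟨π, hπ, hπC⟩, -⟩ := hproj y (n + 1) (by omega)
      have hg : gelfand k (A y (n + 1 + 1)) ≤ M * (M * gelfand k (A y n)) := by
        rw [hcocL y (n + 1)]
        refine (gelfand_comp_le k _ _ hM (hAM _)).trans ?_
        gcongr
        rw [hcocL y n]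
        exact gelfand_comp_le k _ _ hM (hAM _)
      have hR : restrNorm (A y (n + 1)) (F y (n + 1)) ≤
          Ck * ((K * τ ^ (n + 1) * (M * M)) * gelfand k (A y n)) := by
        refine (hrestr y (n + 1) (by omega)).trans ?_
        gcongr
        refine ((le_max_left _ _).trans (hgap y (n + 1) (by omega))).trans ?_
        calc K * τ ^ (n + 1) * gelfand k (A y (n + 1 + 1))
            ≤ K * τ ^ (n + 1) * (M * (M * gelfand k (A y n))) := by gcongr
          _ = _ := by ring
      have hB := hcocL y n
      rw [hTny] at hB
      obtain ⟨w', hw', hle⟩ := step_equivariant hCk (by positivity) hB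
        (hmapE y n hn1) (hmin y n hn1) (hsplit y (n + 1) (by omega)).1
        (hmapE y (n + 1) (by omega)) (hmapF y (n + 1) (by omega)) hπ hπC hR hw
      refine ⟨w', ?_, hle.trans ?_⟩
      · simp only [hyT]
        exact hw'
      · have hpow : τ ^ n ≤ τ ^ m := pow_le_pow_of_le_one hτ0.le hτ1.le (by omega)
        calc Ck * Ck * (1 + Ck) * (K * τ ^ (n + 1) * (M * M)) * ‖w‖
            = C₂ * τ ^ n * ‖w‖ := by rw [hC₂]; ring
          _ ≤ C₂ * τ ^ m * ‖w‖ := by gcongr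
end
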